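/- arXiv:1309.5898 — 2 statements merged into one kernel-verified Lean document; each statement's English description precedes it below -/
import Mathlib

section
/- Let m,n ≥ 2, let A_1,…,A_l ∈ ℂ^{n×m} with l ≥ 2 be linearly independent, and let L(X) = ∑_{i=1}^l A_i X A_i^*. For j ∈ {1,…,m} let B_j ∈ ℂ^{n×l} be the matrix whose i-th column is A_i e_j, and let r be the dimension of the complex span of B_1,…,B_m. If p is a positive integer with p(n + l − p) + r ≥ nl + 1, then there exists a nonzero vector u ∈ ℂ^m such that L(uu^*) is nonzero and has rank at most p. In particular, if r ≥ (n−1)(l−1) + 1, then there exists a nonzero u ∈ ℂ^m with rank L(uu^*) = 1. -/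
open Matrix
open scoped ComplexOrder

/-- The Choi matrix of a linear map `L` from `m × m` to `n × n` complex matrices:
its `((i,p),(j,q))` entry is the `(p,q)` entry of `L(E_{ij})`. -/
def choi (m n : ℕ) (L : Matrix (Fin m) (Fin m) ℂ →ₗ[ℂ] Matrix (Fin n) (Fin n) ℂ) :
    Matrix (Fin m × Fin n) (Fin m × Fin n) ℂ :=
  Matrix.of fun ip jq => L (Matrix.single ip.1 jq.1 (1 : ℂ)) ip.2 jq.2

/-- `L` is a quantum channel: it admits a Kraus representation
`L(X) = ∑ Aᵢ X Aᵢ*` with `∑ Aᵢ* Aᵢ = I`. -/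
def IsChannel (m n : ℕ) (L : Matrix (Fin m) (Fin m) ℂ →ₗ[ℂ] Matrix (Fin n) (Fin n) ℂ) : Prop :=
  ∃ (k : ℕ) (A : Fin k → Matrix (Fin n) (Fin m) ℂ),
    (∀ X, L X = ∑ i, A i * X * (A i)ᴴ) ∧ ∑ i, (A i)ᴴ * A i = 1

/-- `L` is an extreme point of the convex set of quantum channels. -/
def IsExtremeChannel (m n : ℕ)
    (L : Matrix (Fin m) (Fin m) ℂ →ₗ[ℂ] Matrix (Fin n) (Fin n) ℂ) : Prop :=
  IsChannel m n L ∧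
    ∀ L₁ L₂ : Matrix (Fin m) (Fin m) ℂ →ₗ[ℂ] Matrix (Fin n) (Fin n) ℂ,
      IsChannel m n L₁ → IsChannel m n L₂ → ∀ t : ℝ, 0 < t → t < 1 →
      L = (t : ℂ) • L₁ + ((1 - t : ℝ) : ℂ) • L₂ → L₁ = L ∧ L₂ = L

section QuotientHeight

variable {R : Type*} [CommRing R]

theorem Ideal.height_map_mk_add_one_le {I P Q : Ideal R} [P.IsPrime] [Q.IsPrime]
    (hIP : I ≤ P) (hPQ : P < Q) :
    (P.map (Ideal.Quotient.mk I)).height + 1 ≤ (Q.map (Ideal.Quotient.mk I)).height := by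
  have := Ideal.isPrime_map_quotientMk_of_isPrime hIP
  have := Ideal.isPrime_map_quotientMk_of_isPrime (hIP.trans hPQ.le)
  apply Ideal.height_add_one_le_of_lt_of_isPrime
  refine lt_of_le_of_ne (Ideal.map_mono hPQ.le) fun h => hPQ.ne ?_
  have h' := congrArg (Ideal.comap (Ideal.Quotient.mk I)) h
  rwa [Ideal.comap_map_quotientMk, Ideal.comap_map_quotientMk, sup_eq_right.2 hIP,
    sup_eq_right.2 (hIP.trans hPQ.le)] at h'

theorem Ideal.height_map_mk_le_ncard [IsNoetherianRing R] {I P : Ideal R} {s : Set R}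
    (hs : s.Finite) (hP : P ∈ (I ⊔ Ideal.span s).minimalPrimes) :
    (P.map (Ideal.Quotient.mk I)).height ≤ s.ncard := by
  have hprime : P.IsPrime := hP.1.1
  have hIP : I ≤ P := le_sup_left.trans hP.1.2
  have hsP : Ideal.span s ≤ P := le_sup_right.trans hP.1.2
  have hmap := Ideal.isPrime_map_quotientMk_of_isPrime hIP
  refine (Ideal.height_le_card_of_mem_minimalPrimes_span (s := Ideal.Quotient.mk I '' s)
    (hs.image _) ⟨⟨hmap, ?_⟩, ?_⟩).trans (by exact_mod_cast Set.ncard_image_le hs)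
  · rw [← Ideal.map_span]
    exact Ideal.map_mono hsP
  · rintro Q ⟨hQ, hsQ⟩ hQP
    have hQ' : (Q.comap (Ideal.Quotient.mk I)).IsPrime := Ideal.IsPrime.comap _
    rw [Ideal.map_le_iff_le_comap]
    refine hP.2 ⟨hQ', sup_le ?_ ?_⟩ ?_
    · conv_lhs => rw [← Ideal.mk_ker (I := I)]
      exact Ideal.comap_mono bot_le
    · rwa [← Ideal.map_le_iff_le_comap, Ideal.map_span]
    · refine (Ideal.comap_mono hQP).trans ?_
      rw [Ideal.comap_map_quotientMk, sup_eq_right.2 hIP]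

end QuotientHeight

section Vanishing
open MvPolynomial

variable {K : Type*} [Field K]

theorem MvPolynomial.isPrime_vanishingIdeal_range [Infinite K] {σ τ : Type*}
    (F : σ → MvPolynomial τ K) :
    (vanishingIdeal K (Set.range fun (t : τ → K) (s : σ) => eval t (F s))).IsPrime := by
  have : vanishingIdeal K (Set.range fun (t : τ → K) (s : σ) => eval t (F s)) =
      RingHom.ker (aeval F : MvPolynomial σ K →ₐ[K] MvPolynomial τ K) := by
    ext f
    have key (t : τ → K) : aeval (fun s => eval t (F s)) f = eval t (aeval F f) := by
      have h : aeval (fun s => eval t (F s)) = (aeval t).comp (aeval (R := K) F) := by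
        ext s
        simp [aeval_eq_eval]
      rw [h]
      simp [aeval_eq_eval]
    rw [RingHom.mem_ker, mem_vanishingIdeal_iff]
    constructor
    · intro h
      refine MvPolynomial.funext fun t => ?_
      rw [map_zero]
      exact (key t).symm.trans (h _ ⟨t, rfl⟩)
    · rintro h _ ⟨t, rfl⟩
      exact (key t).trans ((congrArg (eval t) h).trans (map_zero _))
  rw [this]
  exact RingHom.ker_isPrime _

theorem MvPolynomial.vanishingIdeal_lt_of_aeval_ne_zero {σ : Type*} {Z Z' : Set (σ → K)}
    (h : Z ⊆ Z') (f : MvPolynomial σ K) (hf : ∀ z ∈ Z, aeval z f = 0) {w : σ → K} (hw : w ∈ Z')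
    (hfw : aeval w f ≠ 0) : vanishingIdeal K Z' < vanishingIdeal K Z :=
  lt_of_le_of_ne (vanishingIdeal_anti_mono h) fun he =>
    hfw ((he ▸ (hf : f ∈ vanishingIdeal K Z) : f ∈ vanishingIdeal K Z') w hw)

end Vanishing

section Minors
variable {K : Type*} [Field K]

theorem Matrix.det_mul_eq_zero_of_card_lt {ι κ : Type*} [Fintype ι] [Fintype κ] [DecidableEq ι]
    (U : Matrix ι κ K) (V : Matrix κ ι K) (h : Fintype.card κ < Fintype.card ι) :
    (U * V).det = 0 := by
  by_contra hd
  have h1 := Matrix.rank_of_det_ne_zero hd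
  have h2 := (Matrix.rank_mul_le_left U V).trans U.rank_le_card_width
  omega

theorem Matrix.exists_mul_mul_eq_one_of_le_rank {n l : Type*} [Fintype n] [Fintype l]
    [DecidableEq n] [DecidableEq l] (Z : Matrix n l K) {q : ℕ} (h : q ≤ Z.rank) :
    ∃ (C : Matrix (Fin q) n K) (E : Matrix l (Fin q) K), C * Z * E = 1 := by
  obtain ⟨f, hf⟩ := exists_linearIndependent_of_le_finrank (R := K) (M := LinearMap.range Z.mulVecLin) h
  choose v hv using fun k => (f k).2
  have hw : LinearIndependent K fun k => (f k : n → K) :=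
    hf.map' (Submodule.subtype _) (Submodule.ker_subtype _)
  obtain ⟨g, hg⟩ := LinearMap.exists_leftInverse_of_injective
    (Fintype.linearCombination K fun k => (f k : n → K))
    (LinearMap.ker_eq_bot.2 hw.fintypeLinearCombination_injective)
  refine ⟨LinearMap.toMatrix' g, (Matrix.of v)ᵀ, ?_⟩
  rw [Matrix.mul_assoc]
  refine Matrix.ext_of_mulVec_single fun k => ?_
  rw [Matrix.one_mulVec]
  have h1 : Matrix.mulVec (Matrix.of v)ᵀ (Pi.single k 1) = v k := by
    ext; simp
  have h2 := LinearMap.congr_fun hg (Pi.single k 1)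
  rw [← Matrix.mulVec_mulVec, ← Matrix.mulVec_mulVec, h1, LinearMap.toMatrix'_mulVec]
  have h3 : Z *ᵥ v k = f k := hv k
  rw [h3]
  simpa [Fintype.linearCombination_apply_single, Matrix.mulVec_single_one] using h2

end Minors

section SupportedProducts
open MvPolynomial

variable {K : Type*} [Field K] {n p l : ℕ}

/-- Products `X * Y` of an `n × p` and a `p × l` matrix whose supports lie in `S` and `T`. -/
def supportedProducts (K : Type*) [Field K] {n p l : ℕ} (S : Fin n → Fin p → Prop)
    (T : Fin p → Fin l → Prop) : Set (Fin n × Fin l → K) :=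
  {z | ∃ (X : Matrix (Fin n) (Fin p) K) (Y : Matrix (Fin p) (Fin l) K),
    (∀ i b, X i b ≠ 0 → S i b) ∧ (∀ b j, Y b j ≠ 0 → T b j) ∧ ∀ i j, z (i, j) = (X * Y) i j}

theorem supportedProducts_mono {S S' : Fin n → Fin p → Prop} {T T' : Fin p → Fin l → Prop}
    (hS : ∀ i b, S i b → S' i b) (hT : ∀ b j, T b j → T' b j) :
    supportedProducts K S T ⊆ supportedProducts K S' T' := by
  rintro z ⟨X, Y, hX, hY, hz⟩
  exact ⟨X, Y, fun i b h => hS i b (hX i b h), fun b j h => hT b j (hY b j h), hz⟩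

theorem isPrime_vanishingIdeal_supportedProducts [Infinite K] (S : Fin n → Fin p → Prop)
    (T : Fin p → Fin l → Prop) : (vanishingIdeal K (supportedProducts K S T)).IsPrime := by
  classical
  convert isPrime_vanishingIdeal_range (K := K) (τ := Fin n × Fin p ⊕ Fin p × Fin l)
    (fun s : Fin n × Fin l => ∑ b : Fin p,
      (if S s.1 b then X (Sum.inl (s.1, b)) else 0) * (if T b s.2 then X (Sum.inr (b, s.2)) else 0))
  ext z
  constructor
  · rintro ⟨X, Y, hX, hY, hz⟩
    refine ⟨Sum.elim (fun s => X s.1 s.2) (fun s => Y s.1 s.2), ?_⟩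
    ext ⟨i, j⟩
    simp only [hz, Matrix.mul_apply, map_sum, map_mul]
    refine Finset.sum_congr rfl fun b _ => ?_
    congr 1
    · split_ifs with h
      · simp
      · simpa using (not_not.1 (mt (hX i b) h)).symm
    · split_ifs with h
      · simp
      · simpa using (not_not.1 (mt (hY b j) h)).symm
  · rintro ⟨t, rfl⟩
    refine ⟨Matrix.of fun i b => if S i b then t (Sum.inl (i, b)) else 0,
      Matrix.of fun b j => if T b j then t (Sum.inr (b, j)) else 0, ?_, ?_, ?_⟩
    · intro i b h
      by_contra h'
      simp [h'] at h
    · intro b j h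
      by_contra h'
      simp [h'] at h
    · intro i j
      simp only [map_sum, map_mul, Matrix.mul_apply, Matrix.of_apply]
      refine Finset.sum_congr rfl fun b _ => ?_
      congr 1 <;> split_ifs <;> simp

/-- If every entry `(ρ x, γ y)` of `X * Y` only involves the inner indices `b < a` when the supports
lie in `S`, `T`, while the positions `(ρ x, x)` and `(x, γ x)` for `x ≤ a` are allowed by `S'`, `T'`,
then the vanishing ideal strictly drops: the minor with rows `ρ` and columns `γ` separates. -/
theorem vanishingIdeal_supportedProducts_lt {S S' : Fin n → Fin p → Prop}
    {T T' : Fin p → Fin l → Prop} (hS : ∀ i b, S i b → S' i b) (hT : ∀ b j, T b j → T' b j)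
    {a : ℕ} (ha : a + 1 ≤ p) (ρ : Fin (a + 1) → Fin n) (γ : Fin (a + 1) → Fin l)
    (hρ : Function.Injective ρ) (hγ : Function.Injective γ)
    (hST : ∀ x y (b : Fin p), a ≤ b → S (ρ x) b → T b (γ y) → False)
    (hS' : ∀ x, S' (ρ x) (Fin.castLE ha x)) (hT' : ∀ x, T' (Fin.castLE ha x) (γ x)) :
    vanishingIdeal K (supportedProducts K S' T') < vanishingIdeal K (supportedProducts K S T) := by
  classical
  have hcast : Function.Injective (Fin.castLE ha) := Fin.castLE_injective ha
  have heval (z : Fin n × Fin l → K) :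
      aeval z (Matrix.of fun x y => (X (ρ x, γ y) : MvPolynomial (Fin n × Fin l) K)).det =
        (Matrix.of fun x y => z (ρ x, γ y)).det := by
    rw [AlgHom.map_det]
    congr 1
    ext x y
    simp
  refine vanishingIdeal_lt_of_aeval_ne_zero (supportedProducts_mono hS hT)
    (Matrix.of fun x y => X (ρ x, γ y)).det ?_
    (w := fun s => ∑ b, (if s.1 = ρ b then 1 else 0) * (if s.2 = γ b then 1 else 0)) ?_ ?_
  · rintro z ⟨X, Y, hX, hY, hz⟩
    rw [heval]
    convert Matrix.det_mul_eq_zero_of_card_lt (X.submatrix ρ (Fin.castLE (Nat.le_of_succ_le ha)))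
      (Y.submatrix (Fin.castLE (Nat.le_of_succ_le ha)) γ) (by simp) using 2
    ext x y
    rw [Matrix.of_apply, hz, Matrix.mul_apply, Matrix.mul_apply]
    refine (Fintype.sum_of_injective _ (Fin.castLE_injective (Nat.le_of_succ_le ha)) _ _ ?_ fun _ => rfl).symm
    intro b hb
    have hab : a ≤ b := by
      by_contra h
      exact hb ⟨⟨b, not_le.1 h⟩, rfl⟩
    by_contra h
    exact hST x y b hab (hX _ _ (left_ne_zero_of_mul h)) (hY _ _ (right_ne_zero_of_mul h))
  · refine ⟨Matrix.of fun i b => ∑ x, if b = Fin.castLE ha x ∧ i = ρ x then 1 else 0,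
      Matrix.of fun b j => ∑ x, if b = Fin.castLE ha x ∧ j = γ x then 1 else 0, ?_, ?_, ?_⟩
    · intro i b h
      rw [Matrix.of_apply] at h
      obtain ⟨x, -, hx⟩ := Finset.exists_ne_zero_of_sum_ne_zero h
      obtain ⟨rfl, rfl⟩ := (ite_ne_right_iff.1 hx).1
      exact hS' x
    · intro b j h
      rw [Matrix.of_apply] at h
      obtain ⟨x, -, hx⟩ := Finset.exists_ne_zero_of_sum_ne_zero h
      obtain ⟨rfl, rfl⟩ := (ite_ne_right_iff.1 hx).1
      exact hT' x
    · intro i j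
      rw [Matrix.mul_apply]
      refine Fintype.sum_of_injective _ hcast _ _ ?_ ?_
      · intro b hb
        have : ∀ x, b ≠ Fin.castLE ha x := fun x hx => hb ⟨x, hx.symm⟩
        simp [this]
      · intro x
        simp [hcast.eq_iff, ite_and, mul_comm]
  · rw [heval]
    have : (Matrix.of fun x y => ∑ b, (if ρ x = ρ b then (1 : K) else 0) *
        (if γ y = γ b then 1 else 0)) = 1 := by
      ext x y
      simp [hρ.eq_iff, hγ.eq_iff, Matrix.one_apply]
    simp only [this, Matrix.det_one]
    exact one_ne_zero

theorem rank_le_of_mem_zeroLocus_vanishingIdeal (Z : Matrix (Fin n) (Fin l) K)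
    (hZ : (fun s => Z s.1 s.2) ∈ zeroLocus K (vanishingIdeal K
      (supportedProducts K (fun (_ : Fin n) (_ : Fin p) => True) fun _ (_ : Fin l) => True))) :
    Z.rank ≤ p := by
  by_contra! h
  obtain ⟨U, V, hUV⟩ := Z.exists_mul_mul_eq_one_of_le_rank (Nat.succ_le_of_lt h)
  let W : Matrix (Fin n) (Fin l) (MvPolynomial (Fin n × Fin l) K) := Matrix.of fun i j => X (i, j)
  let U' : Matrix (Fin (p + 1)) (Fin n) (MvPolynomial (Fin n × Fin l) K) := U.map C
  let V' : Matrix (Fin l) (Fin (p + 1)) (MvPolynomial (Fin n × Fin l) K) := V.map C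
  let f := (U' * W * V').det
  have heval (z : Fin n × Fin l → K) : aeval z f = (U * (Matrix.of fun i j => z (i, j)) * V).det := by
    rw [AlgHom.map_det]
    congr 1
    ext x y
    simp [U', V', W, Matrix.mul_apply]
  have h0 := hZ f (by
    rintro z ⟨X, Y, -, -, hz⟩
    rw [heval]
    have : (Matrix.of fun i j => z (i, j)) = X * Y := by
      ext i j
      exact hz i j
    rw [this, ← Matrix.mul_assoc, Matrix.mul_assoc]
    exact Matrix.det_mul_eq_zero_of_card_lt _ _ (by simp))
  rw [heval] at h0
  have : (Matrix.of fun i j => Z i j) = Z := rfl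
  simp [this, hUV] at h0

end SupportedProducts

section Stages
open MvPolynomial

variable {K : Type*} [Field K]

/-- Products `X * Y` whose parameters `X i b` (`b ≤ i`) and `Y b j` (`b < j`) are free up to the
position `(a, c)`: everything with `b < a`, and for `b = a` the entries `X i a` with `i < c` and
`Y a j` with `n + j < c`. The diagonal of `Y` is always free. -/
def stagedProducts (K : Type*) [Field K] (n p l a c : ℕ) : Set (Fin n × Fin l → K) :=
  supportedProducts K
    (fun (i : Fin n) (b : Fin p) => (b : ℕ) ≤ i ∧ ((b : ℕ) < a ∨ (b : ℕ) = a ∧ (i : ℕ) < c))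
    (fun (b : Fin p) (j : Fin l) => (j : ℕ) = b ∨
      (b : ℕ) < j ∧ ((b : ℕ) < a ∨ (b : ℕ) = a ∧ n + (j : ℕ) < c))

variable {n p l : ℕ}

theorem stagedProducts_subset_succ_right (a c : ℕ) :
    stagedProducts K n p l a c ⊆ stagedProducts K n p l a (c + 1) :=
  supportedProducts_mono (fun _ _ => by omega) (fun _ _ => by omega)

theorem stagedProducts_subset_succ_left (a : ℕ) :
    stagedProducts K n p l a (n + l) ⊆ stagedProducts K n p l (a + 1) 0 :=
  supportedProducts_mono (fun _ _ => by omega) (fun _ _ => by omega)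

/-- The index map `0, …, a - 1, i`. -/
def initialThen {q : ℕ} (a : ℕ) (i : Fin q) (h : a ≤ i) (x : Fin (a + 1)) : Fin q :=
  if (x : ℕ) < a then ⟨x, by omega⟩ else i

theorem initialThen_injective {q a : ℕ} (i : Fin q) (h : a ≤ i) :
    Function.Injective (initialThen a i h) := by
  intro x y hxy
  have := congrArg Fin.val hxy
  unfold initialThen at this
  ext
  split_ifs at this <;> simp only at this <;> omega

theorem vanishingIdeal_stagedProducts_lt_of_lt_left {a c : ℕ} (hap : a < p) (hal : a < l)
    (hac : a ≤ c) (hcn : c < n) :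
    vanishingIdeal K (stagedProducts K n p l a (c + 1)) <
      vanishingIdeal K (stagedProducts K n p l a c) := by
  refine vanishingIdeal_supportedProducts_lt (fun _ _ => by omega) (fun _ _ => by omega) hap
    (initialThen a ⟨c, hcn⟩ hac) (initialThen a ⟨a, hal⟩ le_rfl) (initialThen_injective _ _)
    (initialThen_injective _ _) ?_ ?_ ?_
  · intro x y b hab
    unfold initialThen
    split_ifs <;> simp only <;> omega
  · intro x
    unfold initialThen
    split_ifs <;> simp only [Fin.val_castLE] <;> omega
  · intro x
    unfold initialThen
    split_ifs
    · simp only [Fin.val_castLE, true_or]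
    · simp only [Fin.val_castLE]
      omega

theorem vanishingIdeal_stagedProducts_lt_of_lt_right {a j : ℕ} (hap : a < p) (han : a < n)
    (haj : a < j) (hjl : j < l) :
    vanishingIdeal K (stagedProducts K n p l a (n + j + 1)) <
      vanishingIdeal K (stagedProducts K n p l a (n + j)) := by
  refine vanishingIdeal_supportedProducts_lt (fun _ _ => by omega) (fun _ _ => by omega) hap
    (initialThen a ⟨a, han⟩ le_rfl) (initialThen a ⟨j, hjl⟩ haj.le) (initialThen_injective _ _)
    (initialThen_injective _ _) ?_ ?_ ?_
  · intro x y b hab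
    unfold initialThen
    split_ifs <;> simp only <;> omega
  · intro x
    unfold initialThen
    split_ifs <;> simp only [Fin.val_castLE] <;> omega
  · intro x
    unfold initialThen
    split_ifs
    · simp only [Fin.val_castLE, true_or]
    · simp only [Fin.val_castLE]
      omega

/-- The origin has codimension at least `p * (n + l - p)` in the variety of `n × l` matrices of
rank at most `p`. -/
theorem le_height_map_vanishingIdeal_stagedProducts [Infinite K] (hn : p ≤ n) (hl : p ≤ l)
    {I : Ideal (MvPolynomial (Fin n × Fin l) K)}
    (hI : ∀ a c, I ≤ vanishingIdeal K (stagedProducts K n p l a c)) :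
    ((p * (n + l - p) : ℕ) : ℕ∞) ≤
      ((vanishingIdeal K (stagedProducts K n p l 0 0)).map (Ideal.Quotient.mk I)).height := by
  let H (a c : ℕ) : ℕ∞ :=
    ((vanishingIdeal K (stagedProducts K n p l a c)).map (Ideal.Quotient.mk I)).height
  have hprime (a c : ℕ) : (vanishingIdeal K (stagedProducts K n p l a c)).IsPrime :=
    isPrime_vanishingIdeal_supportedProducts _ _
  have hmono {a c a' c' : ℕ} (h : stagedProducts K n p l a c ⊆ stagedProducts K n p l a' c') :
      H a' c' ≤ H a c := Ideal.height_mono (Ideal.map_mono (vanishingIdeal_anti_mono h))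
  have hskip (a c d : ℕ) : H a (c + d) ≤ H a c := by
    induction d with
    | zero => exact le_rfl
    | succ d ih => exact (hmono (stagedProducts_subset_succ_right a (c + d))).trans ih
  have hrun (a c d : ℕ) (h : ∀ e < d, vanishingIdeal K (stagedProducts K n p l a (c + e + 1)) <
      vanishingIdeal K (stagedProducts K n p l a (c + e))) : H a (c + d) + d ≤ H a c := by
    induction d with
    | zero => simp
    | succ d ih =>
      refine le_trans ?_ (ih fun e he => h e (by omega))
      have h1 : H a (c + d + 1) + 1 ≤ H a (c + d) :=
        Ideal.height_map_mk_add_one_le (hI _ _) (h d (by omega))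
      calc H a (c + (d + 1)) + ((d + 1 : ℕ) : ℕ∞) = (H a (c + d + 1) + 1) + d := by
            rw [add_right_comm, add_assoc, ← Nat.cast_add_one]
            rfl
        _ ≤ H a (c + d) + d := by gcongr
  have hblock (a : ℕ) (ha : a < p) : H (a + 1) 0 + ((n + l - 2 * a - 1 : ℕ) : ℕ∞) ≤ H a 0 := by
    have h1 : H a a ≤ H a 0 := by simpa using hskip a 0 a
    have h2 := hrun a a (n - a) fun e he =>
      vanishingIdeal_stagedProducts_lt_of_lt_left ha (by omega) (by omega) (by omega)
    have h3 := hskip a n (a + 1)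
    have h4 := hrun a (n + (a + 1)) (l - (a + 1)) fun e he => by
      rw [add_assoc n]
      exact vanishingIdeal_stagedProducts_lt_of_lt_right ha (by omega) (by omega) (by omega)
    have h5 : H (a + 1) 0 ≤ H a (n + l) := hmono (stagedProducts_subset_succ_left a)
    rw [show a + (n - a) = n by omega] at h2
    rw [show n + (a + 1) + (l - (a + 1)) = n + l by omega] at h4
    calc H (a + 1) 0 + ((n + l - 2 * a - 1 : ℕ) : ℕ∞)
        = H (a + 1) 0 + ((l - (a + 1) : ℕ) : ℕ∞) + ((n - a : ℕ) : ℕ∞) := by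
          rw [add_assoc, ← Nat.cast_add]
          congr 2
          omega
      _ ≤ H a (n + l) + ((l - (a + 1) : ℕ) : ℕ∞) + ((n - a : ℕ) : ℕ∞) := by gcongr
      _ ≤ H a n + ((n - a : ℕ) : ℕ∞) := by
          gcongr
          exact h4.trans h3
      _ ≤ H a 0 := h2.trans h1
  have hall (a : ℕ) (ha : a ≤ p) : H a 0 + ((a * (n + l - a) : ℕ) : ℕ∞) ≤ H 0 0 := by
    induction a with
    | zero => simp
    | succ a ih =>
      refine le_trans ?_ (ih (by omega))
      have harith : (a + 1) * (n + l - (a + 1)) = (n + l - 2 * a - 1) + a * (n + l - a) := by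
        obtain ⟨d, hd⟩ := Nat.exists_eq_add_of_le (show 2 * a + 1 ≤ n + l by omega)
        rw [show n + l - (a + 1) = a + d by omega, show n + l - 2 * a - 1 = d by omega,
          show n + l - a = a + 1 + d by omega]
        ring
      rw [harith, Nat.cast_add, ← add_assoc]
      gcongr
      exact hblock a (by omega)
  exact le_add_self.trans (hall p le_rfl)

end Stages

section LinearSubspace
open MvPolynomial

/-- A linear space of `n × l` matrices over an algebraically closed field whose dimension exceeds
`(n - p) * (l - p)` contains a nonzero matrix of rank at most `p`. -/
theorem Submodule.exists_ne_zero_rank_le {K : Type*} [Field K] [IsAlgClosed K] {n p l : ℕ}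
    (hn : p ≤ n) (hl : p ≤ l) (V : Submodule K (Matrix (Fin n) (Fin l) K))
    (hV : n * l < p * (n + l - p) + Module.finrank K V) :
    ∃ B ∈ V, B ≠ 0 ∧ B.rank ≤ p := by
  classical
  by_contra! hcon
  have := IsAlgClosed.instInfinite (K := K)
  let D : Set (Fin n × Fin l → K) :=
    supportedProducts K (fun (_ : Fin n) (_ : Fin p) => True) fun _ (_ : Fin l) => True
  let b := Module.finBasis K (Matrix (Fin n) (Fin l) K ⧸ V)
  let φ (k) : Module.Dual K (Matrix (Fin n) (Fin l) K) := b.coord k ∘ₗ V.mkQ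
  let poly (φ : Module.Dual K (Matrix (Fin n) (Fin l) K)) : MvPolynomial (Fin n × Fin l) K :=
    ∑ i, ∑ j, C (φ (Matrix.single i j 1)) * X (i, j)
  have hpoly (φ : Module.Dual K (Matrix (Fin n) (Fin l) K)) (z : Fin n × Fin l → K) :
      aeval z (poly φ) = φ (Matrix.of fun i j => z (i, j)) := by
    conv_rhs => rw [Matrix.matrix_eq_sum_single (Matrix.of fun i j => z (i, j))]
    simp only [poly, map_sum, map_mul, aeval_C, aeval_X, Algebra.algebraMap_self, RingHom.id_apply]
    refine Finset.sum_congr rfl fun i _ => Finset.sum_congr rfl fun j _ => ?_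
    rw [Matrix.of_apply, ← mul_one (z (i, j)), ← smul_eq_mul (z (i, j)) (1 : K),
      ← Matrix.smul_single, map_smul]
    simp [mul_comm]
  let s : Set (MvPolynomial (Fin n × Fin l) K) := Set.range fun k => poly (φ k)
  have hs : s.Finite := Set.finite_range _
  have hzero : stagedProducts K n p l 0 0 = {0} := by
    ext z
    rw [Set.mem_singleton_iff]
    constructor
    · rintro ⟨X, Y, hX, -, hz⟩
      have : X = 0 := by
        ext i b
        by_contra h
        have := hX i b h
        omega
      ext ⟨i, j⟩
      simp [hz, this]
    · rintro rfl
      exact ⟨0, 0, by simp, by simp, by simp⟩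
  have hmin : vanishingIdeal K (stagedProducts K n p l 0 0) ∈
      (vanishingIdeal K D ⊔ Ideal.span s).minimalPrimes := by
    refine ⟨⟨isPrime_vanishingIdeal_supportedProducts _ _, sup_le ?_ ?_⟩, ?_⟩
    · exact vanishingIdeal_anti_mono (supportedProducts_mono (by simp) (by simp))
    · rw [hzero, Ideal.span_le]
      rintro _ ⟨k, rfl⟩
      rw [SetLike.mem_coe, mem_vanishingIdeal_singleton_iff, hpoly]
      exact map_zero _
    · rintro Q ⟨hQ, hQle⟩ -
      rw [← hQ.isRadical.radical, ← vanishingIdeal_zeroLocus_eq_radical (K := K), hzero]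
      refine vanishingIdeal_anti_mono fun z hz => ?_
      have hD := zeroLocus_anti_mono (le_sup_left.trans hQle) hz
      have hlin := zeroLocus_anti_mono (le_sup_right.trans hQle) hz
      have hrank := rank_le_of_mem_zeroLocus_vanishingIdeal (Matrix.of fun i j => z (i, j)) hD
      have hmem : (Matrix.of fun i j => z (i, j)) ∈ V := by
        rw [← Submodule.Quotient.mk_eq_zero, ← b.forall_coord_eq_zero_iff]
        intro k
        have := hlin _ (Ideal.subset_span ⟨k, rfl⟩)
        rwa [hpoly] at this
      by_contra hne
      refine (hcon _ hmem fun h => hne ?_).not_ge hrank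
      ext ⟨i, j⟩
      exact congrFun (congrFun h i) j
  have hupper := Ideal.height_map_mk_le_ncard hs hmin
  have hlower := le_height_map_vanishingIdeal_stagedProducts (K := K) hn hl
    (I := vanishingIdeal K D) fun a c =>
      vanishingIdeal_anti_mono (supportedProducts_mono (by simp) (by simp))
  have hle : p * (n + l - p) ≤ s.ncard := by exact_mod_cast hlower.trans hupper
  have hcard : s.ncard ≤ Module.finrank K (Matrix (Fin n) (Fin l) K ⧸ V) := by
    have := Set.ncard_image_le (f := fun k => poly (φ k)) (Set.finite_univ)
    simpa [Set.image_univ, Set.ncard_univ] using this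
  have hfin := V.finrank_quotient_add_finrank
  rw [Module.finrank_matrix, Fintype.card_fin, Fintype.card_fin, Module.finrank_self,
    mul_one] at hfin
  omega

end LinearSubspace

section Kraus

theorem sum_mul_vecMulVec_mul_conjTranspose {m n l : ℕ} (A : Fin l → Matrix (Fin n) (Fin m) ℂ)
    (u : Fin m → ℂ) :
    ∑ i, A i * Matrix.vecMulVec u (star u) * (A i)ᴴ =
      (∑ j, u j • (Matrix.of fun p i => A i p j : Matrix (Fin n) (Fin l) ℂ)) *
        (∑ j, u j • (Matrix.of fun p i => A i p j : Matrix (Fin n) (Fin l) ℂ))ᴴ := by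
  have hB : (∑ j, u j • (Matrix.of fun p i => A i p j : Matrix (Fin n) (Fin l) ℂ)) =
      Matrix.of fun p i => (A i *ᵥ u) p := by
    ext p i
    simp [Matrix.sum_apply, Matrix.mulVec, dotProduct, mul_comm]
  ext p q
  simp only [hB, Matrix.sum_apply, Matrix.mul_apply (N := (Matrix.of _)ᴴ),
    Matrix.mul_vecMulVec, Matrix.vecMulVec_mul, ← Matrix.star_mulVec]
  simp [Matrix.vecMulVec_apply]

theorem exists_mem_span_ne_zero_rank_le {m n l : ℕ} (hl : 0 < l)
    (A : Fin l → Matrix (Fin n) (Fin m) ℂ) (hA : LinearIndependent ℂ A) (p : ℕ)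
    (hp : (n : ℤ) * l + 1 ≤ (p : ℤ) * ((n : ℤ) + l - p) + Module.finrank ℂ (Submodule.span ℂ
      (Set.range (fun j : Fin m => (Matrix.of fun (p : Fin n) (i : Fin l) => A i p j :
        Matrix (Fin n) (Fin l) ℂ))))) :
    ∃ B ∈ Submodule.span ℂ (Set.range (fun j : Fin m => (Matrix.of fun (p : Fin n) (i : Fin l) =>
      A i p j : Matrix (Fin n) (Fin l) ℂ))), B ≠ 0 ∧ B.rank ≤ p := by
  by_cases h : p ≤ n ∧ p ≤ l
  · refine Submodule.exists_ne_zero_rank_le h.1 h.2 _ ?_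
    zify [show p ≤ n + l by omega]
    linarith
  · obtain ⟨a, j, haj⟩ : ∃ a j, A ⟨0, hl⟩ a j ≠ 0 := by
      by_contra! h0
      exact hA.ne_zero ⟨0, hl⟩ (Matrix.ext h0)
    refine ⟨_, Submodule.subset_span ⟨j, rfl⟩, fun h0 => haj (congrFun (congrFun h0 a) ⟨0, hl⟩), ?_⟩
    have h1 := Matrix.rank_le_height (Matrix.of fun (p : Fin n) (i : Fin l) => A i p j)
    have h2 := Matrix.rank_le_width (Matrix.of fun (p : Fin n) (i : Fin l) => A i p j)
    exact (le_min h1 h2).trans (by omega)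

end Kraus

/-- with `B_j = [A₁ e_j … A_l e_j]` and `r = dim span(B₁,…,B_m)`, if
`p(n + l − p) + r ≥ nl + 1` then some nonzero `L(uu*)` has rank at most `p`; in particular if
`r ≥ (n−1)(l−1) + 1` then some `L(uu*)` has rank one. -/
theorem stmt16 (m n l : ℕ) (hm : 2 ≤ m) (hn : 2 ≤ n) (hl : 2 ≤ l)
    (A : Fin l → Matrix (Fin n) (Fin m) ℂ) (hA : LinearIndependent ℂ A)
    (r : ℕ)
    (hr : r = Module.finrank ℂ (Submodule.span ℂ
      (Set.range (fun j : Fin m => (Matrix.of fun (p : Fin n) (i : Fin l) => A i p j :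
        Matrix (Fin n) (Fin l) ℂ))))) :
    (∀ p : ℕ, 0 < p →
      ((n : ℤ) * l + 1 ≤ (p : ℤ) * ((n : ℤ) + l - p) + r) →
      ∃ u : Fin m → ℂ, u ≠ 0 ∧
        (∑ i, A i * Matrix.vecMulVec u (star u) * (A i)ᴴ) ≠ 0 ∧
        (∑ i, A i * Matrix.vecMulVec u (star u) * (A i)ᴴ).rank ≤ p) ∧
    ((n - 1) * (l - 1) + 1 ≤ r →
      ∃ u : Fin m → ℂ, u ≠ 0 ∧
        (∑ i, A i * Matrix.vecMulVec u (star u) * (A i)ᴴ).rank = 1) := by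
  have main : ∀ p : ℕ, ((n : ℤ) * l + 1 ≤ (p : ℤ) * ((n : ℤ) + l - p) + r) →
      ∃ u : Fin m → ℂ, u ≠ 0 ∧
        (∑ i, A i * Matrix.vecMulVec u (star u) * (A i)ᴴ) ≠ 0 ∧
        (∑ i, A i * Matrix.vecMulVec u (star u) * (A i)ᴴ).rank ≤ p := by
    intro p hp
    obtain ⟨B, hB, hB0, hBp⟩ := exists_mem_span_ne_zero_rank_le (by omega) A hA p (hr ▸ hp)
    obtain ⟨u, rfl⟩ := (Submodule.mem_span_range_iff_exists_fun ℂ).1 hB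
    refine ⟨u, ?_, ?_, ?_⟩
    · rintro rfl
      simp at hB0
    · rw [sum_mul_vecMulVec_mul_conjTranspose]
      exact fun h => hB0 (Matrix.self_mul_conjTranspose_eq_zero.1 h)
    · rwa [sum_mul_vecMulVec_mul_conjTranspose, Matrix.rank_self_mul_conjTranspose]
  refine ⟨fun p _ => main p, fun h => ?_⟩
  obtain ⟨u, hu, h0, h1⟩ := main 1 (by
    zify [show 1 ≤ n by omega, show 1 ≤ l by omega] at h
    push_cast
    linarith)
  refine ⟨u, hu, le_antisymm h1 (Nat.one_le_iff_ne_zero.2 fun hrank => h0 ?_)⟩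
  rw [Matrix.rank, Submodule.finrank_eq_zero, LinearMap.range_eq_bot] at hrank
  exact Matrix.mulVec_injective (funext fun v =>
    (LinearMap.congr_fun hrank v).trans (Matrix.zero_mulVec v).symm)
end

section
/- Let L ∈ L_{2,2} be a quantum channel from 2×2 to 2×2 complex matrices. Then L is an extreme point of L_{2,2} if and only if either (1) there exists a unitary U ∈ ℂ^{2×2} with L(X) = U X U^* for all X (equivalently rank Z(L) = 1), or (2) rank Z(L) = 2 and there do not exist t ∈ (0,1) and unitary matrices U_1, U_2 ∈ ℂ^{2×2} with the channels X ↦ U_1 X U_1^* and X ↦ U_2 X U_2^* distinct and L(X) = t·U_1 X U_1^* + (1−t)·U_2 X U_2^* for all X. -/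
open Matrix
open scoped ComplexOrder

section ChoiMatrix

variable {m n : ℕ} {ι : Type*} [Fintype ι]

/-- The partial trace over the output index of a Choi matrix. -/
def partialTrace (m n : ℕ) :
    Matrix (Fin m × Fin n) (Fin m × Fin n) ℂ →ₗ[ℂ] Matrix (Fin m) (Fin m) ℂ where
  toFun Z := Matrix.of fun i j => ∑ p, Z (i, p) (j, p)
  map_add' Y Z := by ext; simp [Finset.sum_add_distrib]
  map_smul' c Z := by ext; simp [Finset.mul_sum]

theorem partialTrace_apply (Z : Matrix (Fin m × Fin n) (Fin m × Fin n) ℂ) (i j : Fin m) :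
    partialTrace m n Z i j = ∑ p, Z (i, p) (j, p) := rfl

theorem partialTrace_conjTranspose (Z : Matrix (Fin m × Fin n) (Fin m × Fin n) ℂ) :
    partialTrace m n Zᴴ = (partialTrace m n Z)ᴴ := by
  ext i j
  simp [partialTrace_apply]

/-- The linear map with a prescribed Choi matrix. -/
def ofChoi (Z : Matrix (Fin m × Fin n) (Fin m × Fin n) ℂ) :
    Matrix (Fin m) (Fin m) ℂ →ₗ[ℂ] Matrix (Fin n) (Fin n) ℂ where
  toFun X := Matrix.of fun p q => ∑ i, ∑ j, X i j * Z (i, p) (j, q)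
  map_add' X Y := by ext; simp [add_mul, Finset.sum_add_distrib]
  map_smul' c X := by ext; simp [Finset.mul_sum, mul_assoc]

theorem ofChoi_apply (Z : Matrix (Fin m × Fin n) (Fin m × Fin n) ℂ)
    (X : Matrix (Fin m) (Fin m) ℂ) (p q : Fin n) :
    ofChoi Z X p q = ∑ i, ∑ j, X i j * Z (i, p) (j, q) := rfl

theorem choi_ofChoi (Z : Matrix (Fin m × Fin n) (Fin m × Fin n) ℂ) :
    choi m n (ofChoi Z) = Z := by
  ext ⟨i, p⟩ ⟨j, q⟩
  simp [choi, ofChoi_apply, Matrix.single_apply, ite_and]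

theorem ofChoi_choi (L : Matrix (Fin m) (Fin m) ℂ →ₗ[ℂ] Matrix (Fin n) (Fin n) ℂ) :
    ofChoi (choi m n L) = L := by
  refine Matrix.ext_linearMap ℂ fun i j => LinearMap.ext_ring ?_
  ext p q
  simp [choi, ofChoi_apply, Matrix.single_apply, ite_and]

theorem choi_injective : Function.Injective (choi m n) := fun L M h => by
  rw [← ofChoi_choi L, h, ofChoi_choi]

theorem choi_add (L M : Matrix (Fin m) (Fin m) ℂ →ₗ[ℂ] Matrix (Fin n) (Fin n) ℂ) :
    choi m n (L + M) = choi m n L + choi m n M := rfl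

theorem choi_smul (c : ℂ) (L : Matrix (Fin m) (Fin m) ℂ →ₗ[ℂ] Matrix (Fin n) (Fin n) ℂ) :
    choi m n (c • L) = c • choi m n L := rfl

/-- The Kraus operator stored in column `l` of `V`. -/
def krausOfCol (V : Matrix (Fin m × Fin n) ι ℂ) (l : ι) : Matrix (Fin n) (Fin m) ℂ :=
  Matrix.of fun p i => V (i, p) l

/-- The matrix whose columns are vectorized Kraus operators. -/
def colOfKraus (A : ι → Matrix (Fin n) (Fin m) ℂ) : Matrix (Fin m × Fin n) ι ℂ :=
  Matrix.of fun ip l => A l ip.2 ip.1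

theorem krausOfCol_colOfKraus {ι : Type*} (A : ι → Matrix (Fin n) (Fin m) ℂ) :
    krausOfCol (colOfKraus A) = A := rfl

theorem ofChoi_mul_conjTranspose_apply (V : Matrix (Fin m × Fin n) ι ℂ)
    (X : Matrix (Fin m) (Fin m) ℂ) :
    ofChoi (V * Vᴴ) X = ∑ l, krausOfCol V l * X * (krausOfCol V l)ᴴ := by
  ext p q
  simp only [ofChoi_apply, Matrix.sum_apply, Matrix.mul_apply, Matrix.conjTranspose_apply,
    krausOfCol, Matrix.of_apply, Finset.mul_sum, Finset.sum_mul]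
  rw [Finset.sum_comm]
  simp_rw [Finset.sum_comm (s := (Finset.univ : Finset (Fin m))) (t := (Finset.univ : Finset ι))]
  refine Finset.sum_congr rfl fun l _ => Finset.sum_congr rfl fun j _ =>
    Finset.sum_congr rfl fun i _ => ?_
  ring

theorem choi_eq_mul_conjTranspose_iff
    (L : Matrix (Fin m) (Fin m) ℂ →ₗ[ℂ] Matrix (Fin n) (Fin n) ℂ)
    (V : Matrix (Fin m × Fin n) ι ℂ) :
    choi m n L = V * Vᴴ ↔ ∀ X, L X = ∑ l, krausOfCol V l * X * (krausOfCol V l)ᴴ := by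
  constructor
  · intro h X
    rw [← ofChoi_mul_conjTranspose_apply, ← h, ofChoi_choi]
  · intro h
    rw [← choi_ofChoi (V * Vᴴ)]
    congr 1
    exact LinearMap.ext fun X => by rw [h, ofChoi_mul_conjTranspose_apply]

theorem partialTrace_mul_diagonal_mul_conjTranspose [DecidableEq ι]
    (V : Matrix (Fin m × Fin n) ι ℂ) (d : ι → ℂ) :
    partialTrace m n (V * diagonal d * Vᴴ) =
      (∑ l, d l • ((krausOfCol V l)ᴴ * krausOfCol V l))ᵀ := by
  ext i j
  simp only [partialTrace_apply, Matrix.transpose_apply, Matrix.sum_apply, Matrix.smul_apply,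
    Matrix.mul_apply (N := Vᴴ), Matrix.mul_diagonal, Matrix.conjTranspose_apply, smul_eq_mul]
  rw [Finset.sum_comm]
  refine Finset.sum_congr rfl fun l _ => ?_
  rw [Matrix.mul_apply, Finset.mul_sum]
  refine Finset.sum_congr rfl fun p _ => ?_
  simp only [Matrix.conjTranspose_apply, krausOfCol, Matrix.of_apply]
  ring

theorem partialTrace_mul_conjTranspose_eq_one_iff (V : Matrix (Fin m × Fin n) ι ℂ) :
    partialTrace m n (V * Vᴴ) = 1 ↔ ∑ l, (krausOfCol V l)ᴴ * krausOfCol V l = 1 := by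
  classical
  have h := partialTrace_mul_diagonal_mul_conjTranspose V fun _ => 1
  simp only [diagonal_one, Matrix.mul_one, one_smul] at h
  rw [h, Matrix.transpose_eq_one]

end ChoiMatrix

section Factorization

theorem Matrix.IsHermitian.exists_eq_mul_diagonal_mul_conjTranspose {κ : Type*} [Fintype κ]
    [DecidableEq κ] {C : Matrix κ κ ℂ} (hC : C.IsHermitian) :
    ∃ U : Matrix κ κ ℂ, Uᴴ * U = 1 ∧ U * Uᴴ = 1 ∧
      C = U * diagonal (Complex.ofReal ∘ hC.eigenvalues) * Uᴴ :=
  ⟨hC.eigenvectorUnitary, Matrix.mem_unitaryGroup_iff'.1 hC.eigenvectorUnitary.2,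
    Matrix.mem_unitaryGroup_iff.1 hC.eigenvectorUnitary.2, hC.spectral_theorem⟩

/-- A positive semidefinite matrix of rank `r` factors through `ℂ^r` with an injective factor. -/
theorem Matrix.PosSemidef.exists_eq_mul_conjTranspose {κ : Type*} [Fintype κ] [DecidableEq κ]
    {Z : Matrix κ κ ℂ} (hZ : Z.PosSemidef) :
    ∃ (V : Matrix κ (Fin Z.rank) ℂ) (W : Matrix (Fin Z.rank) κ ℂ), Z = V * Vᴴ ∧ W * V = 1 := by
  have hH := hZ.isHermitian
  set lam := hH.eigenvalues
  have hnn : ∀ i, 0 ≤ lam i := hZ.eigenvalues_nonneg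
  obtain ⟨e⟩ : Nonempty (Fin Z.rank ≃ {i // lam i ≠ 0}) :=
    ⟨(Fintype.equivFinOfCardEq hH.rank_eq_card_non_zero_eigs.symm).symm⟩
  obtain ⟨U, hUU, -, hspec⟩ : ∃ U : Matrix κ κ ℂ, Uᴴ * U = 1 ∧ U * Uᴴ = 1 ∧
      Z = U * diagonal (Complex.ofReal ∘ lam) * Uᴴ :=
    hH.exists_eq_mul_diagonal_mul_conjTranspose
  refine ⟨Matrix.of fun x l => U x (e l) * (√(lam (e l)) : ℝ),
    Matrix.of fun l x => ((√(lam (e l)))⁻¹ : ℝ) * Uᴴ (e l) x, ?_, ?_⟩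
  · ext x y
    refine Eq.trans ?_ (e.sum_comp fun i : {i // lam i ≠ 0} =>
      U x i * (√(lam i) : ℝ) * star (U y i * (√(lam i) : ℝ))).symm
    conv_lhs => rw [hspec]
    rw [Matrix.mul_apply, ← Fintype.sum_subset (s := Finset.univ.filter fun i => lam i ≠ 0)]
    · rw [Finset.sum_subtype (p := fun i => lam i ≠ 0) _ (by simp)]
      refine Finset.sum_congr rfl fun i _ => ?_
      have hsq : (lam i : ℂ) = (√(lam i) : ℝ) * (√(lam i) : ℝ) := by
        rw [← Complex.ofReal_mul, Real.mul_self_sqrt (hnn i)]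
      simp only [Matrix.mul_diagonal, Function.comp_apply, Matrix.conjTranspose_apply, star_mul',
        RCLike.star_def, Complex.conj_ofReal]
      rw [hsq]
      ring
    · intro i hi
      rw [Matrix.mul_diagonal] at hi
      simp only [Finset.mem_filter, Finset.mem_univ, true_and]
      rintro h0
      simp [h0] at hi
  · ext k l
    have h1 : √(lam (e k)) ≠ 0 := by
      rw [Real.sqrt_ne_zero (hnn _)]
      exact (e k).2
    have h2 := congrFun (congrFun hUU (e k)) (e l)
    rw [Matrix.mul_apply] at h2
    simp only [Matrix.mul_apply, Matrix.of_apply]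
    calc _ = (((√(lam (e k)))⁻¹ : ℝ) : ℂ) * (√(lam (e l)) : ℝ) *
          ∑ j, Uᴴ (e k) j * U j (e l) := by
          rw [Finset.mul_sum]
          exact Finset.sum_congr rfl fun j _ => by ring
      _ = _ := by
          rw [h2]
          by_cases hkl : k = l
          · subst hkl
            rw [Matrix.one_apply_eq, Matrix.one_apply_eq, ← Complex.ofReal_mul,
              inv_mul_cancel₀ h1]
            simp
          · rw [Matrix.one_apply_ne hkl, Matrix.one_apply_ne, mul_zero]
            exact fun h => hkl (e.injective (Subtype.ext h))

open scoped MatrixOrder Matrix.Norms.L2Operator in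
/-- Small Hermitian perturbations of the identity are positive semidefinite. -/
theorem Matrix.IsHermitian.exists_posSemidef_one_add_sub {κ : Type*} [Fintype κ] [DecidableEq κ]
    {C : Matrix κ κ ℂ} (hC : C.IsHermitian) :
    ∃ ε : ℝ, 0 < ε ∧ (1 + (ε : ℂ) • C).PosSemidef ∧ (1 - (ε : ℂ) • C).PosSemidef := by
  have hup : (algebraMap ℝ (Matrix κ κ ℂ) ‖C‖ - C).PosSemidef :=
    Matrix.le_iff.1 (IsSelfAdjoint.le_algebraMap_norm_self hC)
  have hlo : (C - -algebraMap ℝ (Matrix κ κ ℂ) ‖C‖).PosSemidef :=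
    Matrix.le_iff.1 (IsSelfAdjoint.neg_algebraMap_norm_le_self hC)
  have hpos : 0 < ‖C‖ + 1 := by positivity
  have hε : (0 : ℂ) ≤ (((‖C‖ + 1)⁻¹ : ℝ) : ℂ) := by
    exact_mod_cast (inv_pos.2 hpos).le
  have hc : (((‖C‖ + 1)⁻¹ : ℝ) : ℂ) * ((‖C‖ : ℂ) + 1) = 1 := by
    have : (((‖C‖ + 1)⁻¹ * (‖C‖ + 1) : ℝ) : ℂ) = 1 := by
      rw [inv_mul_cancel₀ hpos.ne']; simp
    simpa using this
  have halg : algebraMap ℝ (Matrix κ κ ℂ) ‖C‖ = (‖C‖ : ℂ) • 1 := by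
    rw [Algebra.algebraMap_eq_smul_one]
    ext i j
    simp
  have hone : (1 : Matrix κ κ ℂ) = (((‖C‖ + 1)⁻¹ : ℝ) : ℂ) • ((‖C‖ : ℂ) • 1) +
      (((‖C‖ + 1)⁻¹ : ℝ) : ℂ) • 1 := by
    rw [smul_smul, ← add_smul, ← mul_add_one, hc, one_smul]
  rw [halg] at hup hlo
  refine ⟨(‖C‖ + 1)⁻¹, inv_pos.2 hpos, ?_, ?_⟩
  · convert (hlo.add PosSemidef.one).smul hε using 1
    rw [smul_add, sub_neg_eq_add, smul_add, add_assoc, ← hone, add_comm]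
  · convert (hup.add PosSemidef.one).smul hε using 1
    rw [smul_add, smul_sub, sub_add_eq_add_sub, ← hone]

end Factorization

section Extreme

variable {m n : ℕ}

theorem isChannel_iff (L : Matrix (Fin m) (Fin m) ℂ →ₗ[ℂ] Matrix (Fin n) (Fin n) ℂ) :
    IsChannel m n L ↔ (choi m n L).PosSemidef ∧ partialTrace m n (choi m n L) = 1 := by
  constructor
  · rintro ⟨k, A, hA, h1⟩
    have h := (choi_eq_mul_conjTranspose_iff L (colOfKraus A)).2 hA
    rw [h]
    exact ⟨posSemidef_self_mul_conjTranspose _,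
      (partialTrace_mul_conjTranspose_eq_one_iff _).2 h1⟩
  · rintro ⟨hpos, htr⟩
    obtain ⟨V, -, hV, -⟩ := hpos.exists_eq_mul_conjTranspose
    rw [hV] at htr
    exact ⟨_, krausOfCol V, (choi_eq_mul_conjTranspose_iff L V).1 hV,
      (partialTrace_mul_conjTranspose_eq_one_iff V).1 htr⟩

open scoped MatrixOrder in
/-- If `V * Vᴴ` is a positive combination of positive semidefinite matrices and `V` has a left
inverse, then each of them is of the form `V * G * Vᴴ`. -/
theorem exists_eq_mul_mul_conjTranspose {κ ι : Type*} [Fintype κ] [DecidableEq κ]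
    [Fintype ι] [DecidableEq ι] {V : Matrix κ ι ℂ} {W : Matrix ι κ ℂ} (hW : W * V = 1)
    {Y Z : Matrix κ κ ℂ} (hY : Y.PosSemidef) (hZ : Z.PosSemidef) {s : ℂ} (hs : 0 < s)
    (h : V * Vᴴ = s • Y + Z) :
    ∃ G : Matrix ι ι ℂ, G.IsHermitian ∧ Y = V * G * Vᴴ := by
  obtain ⟨B, -, hB, -⟩ := hY.exists_eq_mul_conjTranspose
  set N := 1 - V * W with hN
  have hNV : N * V = 0 := by
    rw [hN, Matrix.sub_mul, Matrix.mul_assoc, hW]; simp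
  have h0 : s • (N * Y * Nᴴ) + N * Z * Nᴴ = 0 := by
    have : N * (s • Y + Z) * Nᴴ = 0 := by
      rw [← h, ← Matrix.mul_assoc, hNV]; simp
    rw [← this]
    simp [mul_add, add_mul]
  have h1 := ((add_eq_zero_iff_of_nonneg
    (Matrix.nonneg_iff_posSemidef.2 ((hY.mul_mul_conjTranspose_same N).smul hs.le))
    (Matrix.nonneg_iff_posSemidef.2 (hZ.mul_mul_conjTranspose_same N))).1 h0).1
  have h2 : N * B * (N * B)ᴴ = 0 := by
    rw [smul_eq_zero_iff_right hs.ne', hB] at h1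
    rw [← h1, conjTranspose_mul]
    simp only [Matrix.mul_assoc]
  have h3 : B = V * (W * B) := by
    have := Matrix.self_mul_conjTranspose_eq_zero.1 h2
    rw [hN, Matrix.sub_mul, Matrix.one_mul, sub_eq_zero] at this
    rw [← Matrix.mul_assoc]; exact this
  refine ⟨W * B * (W * B)ᴴ, isHermitian_mul_conjTranspose_self _, ?_⟩
  conv_lhs => rw [hB, h3, conjTranspose_mul]
  simp only [Matrix.mul_assoc]

/-- Choi's criterion for extremality in terms of a minimal factorization of the Choi matrix. -/
theorem isExtremeChannel_iff {ι : Type*} [Fintype ι] [DecidableEq ι]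
    {L : Matrix (Fin m) (Fin m) ℂ →ₗ[ℂ] Matrix (Fin n) (Fin n) ℂ} (hL : IsChannel m n L)
    {V : Matrix (Fin m × Fin n) ι ℂ} {W : Matrix ι (Fin m × Fin n) ℂ}
    (hV : choi m n L = V * Vᴴ) (hW : W * V = 1) :
    IsExtremeChannel m n L ↔
      ∀ C : Matrix ι ι ℂ, C.IsHermitian → partialTrace m n (V * C * Vᴴ) = 0 → C = 0 := by
  have hcancel : ∀ C : Matrix ι ι ℂ, V * C * Vᴴ = 0 → C = 0 := fun C hC => by
    have hW' : Vᴴ * Wᴴ = 1 := by rw [← conjTranspose_mul, hW, conjTranspose_one]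
    calc C = (W * V) * C * (Vᴴ * Wᴴ) := by rw [hW, hW']; simp
      _ = W * (V * C * Vᴴ) * Wᴴ := by simp only [Matrix.mul_assoc]
      _ = 0 := by rw [hC]; simp
  have hLtr := ((isChannel_iff L).1 hL).2
  constructor
  · rintro ⟨-, hext⟩ C hC htr
    obtain ⟨ε, hε, hplus, hminus⟩ := hC.exists_posSemidef_one_add_sub
    have hp : V * (1 + (ε : ℂ) • C) * Vᴴ = choi m n L + (ε : ℂ) • (V * C * Vᴴ) := by
      rw [hV, Matrix.mul_add, Matrix.add_mul, Matrix.mul_one, Matrix.mul_smul, Matrix.smul_mul]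
    have hm : V * (1 - (ε : ℂ) • C) * Vᴴ = choi m n L - (ε : ℂ) • (V * C * Vᴴ) := by
      rw [hV, Matrix.mul_sub, Matrix.sub_mul, Matrix.mul_one, Matrix.mul_smul, Matrix.smul_mul]
    have h := (hext (ofChoi (V * (1 + (ε : ℂ) • C) * Vᴴ)) (ofChoi (V * (1 - (ε : ℂ) • C) * Vᴴ))
      ?_ ?_ (1 / 2) (by norm_num) (by norm_num) ?_).1
    · have h' := congrArg (choi m n) h
      rw [choi_ofChoi, hp, add_eq_left, smul_eq_zero_iff_right (by exact_mod_cast hε.ne')] at h'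
      exact hcancel C h'
    · rw [isChannel_iff, choi_ofChoi]
      refine ⟨hplus.mul_mul_conjTranspose_same V, ?_⟩
      rw [hp, map_add, map_smul, htr, hLtr]; simp
    · rw [isChannel_iff, choi_ofChoi]
      refine ⟨hminus.mul_mul_conjTranspose_same V, ?_⟩
      rw [hm, map_sub, map_smul, htr, hLtr]; simp
    · apply choi_injective
      rw [choi_add, choi_smul, choi_smul, choi_ofChoi, choi_ofChoi, hp, hm]
      push_cast
      module
  · intro h
    have key : ∀ (M : Matrix (Fin m) (Fin m) ℂ →ₗ[ℂ] Matrix (Fin n) (Fin n) ℂ)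
        (Z : Matrix (Fin m × Fin n) (Fin m × Fin n) ℂ) (s : ℝ), IsChannel m n M →
        Z.PosSemidef → 0 < s → choi m n L = (s : ℂ) • choi m n M + Z → M = L := by
      intro M Z s hM hZ hs heq
      rw [isChannel_iff] at hM
      obtain ⟨G, hG, hGM⟩ := exists_eq_mul_mul_conjTranspose hW hM.1 hZ
        (s := (s : ℂ)) (by exact_mod_cast hs) (hV ▸ heq)
      have hdiff : V * (G - 1) * Vᴴ = choi m n M - choi m n L := by
        rw [hGM, hV, Matrix.mul_sub, Matrix.sub_mul, Matrix.mul_one]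
      have hG1 := h (G - 1) (hG.sub isHermitian_one) (by
        rw [hdiff, map_sub, hM.2, hLtr, sub_self])
      apply choi_injective
      rw [← sub_eq_zero, ← hdiff, hG1]; simp
    refine ⟨hL, fun L₁ L₂ h₁ h₂ t ht0 ht1 heq => ?_⟩
    have ht0' : (0 : ℂ) ≤ (t : ℂ) := by exact_mod_cast ht0.le
    have ht1' : (0 : ℂ) ≤ ((1 - t : ℝ) : ℂ) := by exact_mod_cast (sub_pos.2 ht1).le
    have heq' := congrArg (choi m n) heq
    rw [choi_add, choi_smul, choi_smul] at heq'
    exact ⟨key L₁ _ t h₁ (((isChannel_iff L₂).1 h₂).1.smul ht1') ht0 heq',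
      key L₂ _ (1 - t) h₂ (((isChannel_iff L₁).1 h₁).1.smul ht0') (sub_pos.2 ht1)
        (by rw [heq', add_comm])⟩

/-- The Choi rank of an extreme channel is at most its input dimension. -/
theorem IsExtremeChannel.rank_choi_le
    {L : Matrix (Fin m) (Fin m) ℂ →ₗ[ℂ] Matrix (Fin n) (Fin n) ℂ}
    (hL : IsExtremeChannel m n L) : (choi m n L).rank ≤ m := by
  obtain ⟨V, W, hV, hW⟩ := ((isChannel_iff L).1 hL.1).1.exists_eq_mul_conjTranspose
  have hext := (isExtremeChannel_iff hL.1 hV hW).1 hL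
  by_contra! hlt
  generalize (choi m n L).rank = r at V W hW hext hlt
  let f : Matrix (Fin r) (Fin r) ℂ →ₗ[ℂ] Matrix (Fin m) (Fin m) ℂ :=
    { toFun := fun C => partialTrace m n (V * C * Vᴴ)
      map_add' := fun C D => by rw [Matrix.mul_add, Matrix.add_mul, map_add]
      map_smul' := fun c C => by simp }
  have hker : f.ker ≠ ⊥ := LinearMap.ker_ne_bot_of_finrank_lt (by
    simp only [Module.finrank_matrix, Fintype.card_fin, Module.finrank_self, mul_one]
    exact Nat.mul_self_lt_mul_self hlt)
  obtain ⟨C, hC, hC0⟩ := (Submodule.ne_bot_iff _).1 hker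
  have hfC : partialTrace m n (V * C * Vᴴ) = 0 := hC
  have hfCH : partialTrace m n (V * Cᴴ * Vᴴ) = 0 := by
    have : V * Cᴴ * Vᴴ = (V * C * Vᴴ)ᴴ := by simp [Matrix.mul_assoc]
    rw [this, partialTrace_conjTranspose, hfC, conjTranspose_zero]
  have hre := hext (C + Cᴴ) (isHermitian_add_transpose_self C) (by
    rw [Matrix.mul_add, Matrix.add_mul, map_add, hfC, hfCH, add_zero])
  have him := hext (Complex.I • (C - Cᴴ)) (by
    rw [Matrix.IsHermitian, conjTranspose_smul, conjTranspose_sub, conjTranspose_conjTranspose]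
    simp only [RCLike.star_def, Complex.conj_I]
    module) (by
    rw [Matrix.mul_smul, Matrix.smul_mul, map_smul, Matrix.mul_sub, Matrix.sub_mul, map_sub, hfC, hfCH]
    simp)
  rw [smul_eq_zero_iff_right Complex.I_ne_zero, sub_eq_zero] at him
  rw [← him, ← two_smul ℂ, smul_eq_zero_iff_right two_ne_zero] at hre
  exact hC0 hre

theorem rank_choi_le_one_of_eq_conj
    {L : Matrix (Fin m) (Fin m) ℂ →ₗ[ℂ] Matrix (Fin n) (Fin n) ℂ}
    {A : Matrix (Fin n) (Fin m) ℂ} (h : ∀ X, L X = A * X * Aᴴ) : (choi m n L).rank ≤ 1 := by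
  have hV : choi m n L = colOfKraus (fun _ : Fin 1 => A) * (colOfKraus fun _ : Fin 1 => A)ᴴ :=
    (choi_eq_mul_conjTranspose_iff _ _).2 fun X => by
      rw [krausOfCol_colOfKraus, h]; simp
  rw [hV]
  exact (rank_mul_le_left _ _).trans (by
    simpa using rank_le_card_width (colOfKraus fun _ : Fin 1 => A))

theorem isExtremeChannel_of_eq_conj [NeZero m]
    {L : Matrix (Fin m) (Fin m) ℂ →ₗ[ℂ] Matrix (Fin n) (Fin n) ℂ} (hL : IsChannel m n L)
    {A : Matrix (Fin n) (Fin m) ℂ} (h : ∀ X, L X = A * X * Aᴴ) : IsExtremeChannel m n L := by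
  have htr := ((isChannel_iff L).1 hL).2
  obtain ⟨V, W, hV, hW⟩ := ((isChannel_iff L).1 hL).1.exists_eq_mul_conjTranspose
  have hr := rank_choi_le_one_of_eq_conj h
  refine (isExtremeChannel_iff hL hV hW).2 fun C _ hC => ?_
  have : Subsingleton (Fin (choi m n L).rank) := Fin.subsingleton_iff_le_one.2 hr
  ext i j
  obtain rfl := Subsingleton.elim i j
  have hCi : C = C i i • 1 := by
    ext k l
    obtain rfl := Subsingleton.elim i k
    obtain rfl := Subsingleton.elim i l
    simp
  rw [hCi, Matrix.mul_smul, Matrix.smul_mul, Matrix.mul_one, ← hV, map_smul, htr,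
    smul_eq_zero_iff_left one_ne_zero] at hC
  exact hC

end Extreme

/-- A nonzero `B` with `Bᴴ * B` scalar is a positive scaling of an isometry. -/
theorem exists_isometry_of_conjTranspose_mul_self_eq_smul {m n : ℕ} [NeZero m]
    {B : Matrix (Fin n) (Fin m) ℂ} (hB : B ≠ 0) {s : ℝ} (h : Bᴴ * B = (s : ℂ) • 1) :
    0 < s ∧ ∃ U : Matrix (Fin n) (Fin m) ℂ, Uᴴ * U = 1 ∧
      ∀ X : Matrix (Fin m) (Fin m) ℂ, B * X * Bᴴ = (s : ℂ) • (U * X * Uᴴ) := by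
  have hs0 : 0 ≤ s := by
    have h0 := (posSemidef_conjTranspose_mul_self B).diag_nonneg (i := 0)
    rw [h] at h0
    simpa using h0
  have hs : 0 < s := hs0.lt_of_ne fun h0 => hB <| by
    rw [← h0] at h
    exact Matrix.conjTranspose_mul_self_eq_zero.1 (by simpa using h)
  have hsC : (s : ℂ) ≠ 0 := by exact_mod_cast hs.ne'
  have hsq : (((√s)⁻¹ : ℝ) : ℂ) * (((√s)⁻¹ : ℝ) : ℂ) = (s : ℂ)⁻¹ := by
    rw [← Complex.ofReal_mul, ← mul_inv, Real.mul_self_sqrt hs0, Complex.ofReal_inv]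
  have hstar : star (((√s)⁻¹ : ℝ) : ℂ) = (((√s)⁻¹ : ℝ) : ℂ) := Complex.conj_ofReal _
  refine ⟨hs, (((√s)⁻¹ : ℝ) : ℂ) • B, ?_, fun X => ?_⟩
  · rw [conjTranspose_smul, hstar, Matrix.smul_mul, Matrix.mul_smul, h, smul_smul, smul_smul, hsq,
      inv_mul_cancel₀ hsC, one_smul]
  · rw [conjTranspose_smul, hstar, Matrix.smul_mul, Matrix.smul_mul, Matrix.mul_smul, smul_smul,
      smul_smul, mul_assoc, hsq, mul_inv_cancel₀ hsC, one_smul]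

/-- A qubit channel of Choi rank two which is not extreme is a proper mixture of two
distinct unitary conjugations. -/
theorem exists_unitary_mixture
    {L : Matrix (Fin 2) (Fin 2) ℂ →ₗ[ℂ] Matrix (Fin 2) (Fin 2) ℂ}
    (hL : IsChannel 2 2 L) (hr : (choi 2 2 L).rank = 2) (hext : ¬ IsExtremeChannel 2 2 L) :
    ∃ (t : ℝ) (U₁ U₂ : Matrix (Fin 2) (Fin 2) ℂ),
      0 < t ∧ t < 1 ∧ U₁ᴴ * U₁ = 1 ∧ U₂ᴴ * U₂ = 1 ∧
      (∃ X : Matrix (Fin 2) (Fin 2) ℂ, U₁ * X * U₁ᴴ ≠ U₂ * X * U₂ᴴ) ∧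
      ∀ X, L X = (t : ℂ) • (U₁ * X * U₁ᴴ) + ((1 - t : ℝ) : ℂ) • (U₂ * X * U₂ᴴ) := by
  have hfac := ((isChannel_iff L).1 hL).1.exists_eq_mul_conjTranspose
  rw [hr] at hfac
  obtain ⟨V, W, hV, hW⟩ := hfac
  rw [isExtremeChannel_iff hL hV hW] at hext
  push Not at hext
  obtain ⟨C, hC, htr, hC0⟩ := hext
  obtain ⟨U, -, hU, hspec⟩ := hC.exists_eq_mul_diagonal_mul_conjTranspose
  have hVU : choi 2 2 L = (V * U) * (V * U)ᴴ := by
    rw [conjTranspose_mul, Matrix.mul_assoc, ← Matrix.mul_assoc U, hU, Matrix.one_mul, hV]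
  have hLB := (choi_eq_mul_conjTranspose_iff L (V * U)).1 hVU
  have hone := ((isChannel_iff L).1 hL).2
  rw [hVU, partialTrace_mul_conjTranspose_eq_one_iff] at hone
  have hzero : partialTrace 2 2
      ((V * U) * diagonal (Complex.ofReal ∘ hC.eigenvalues) * (V * U)ᴴ) = 0 := by
    rw [← htr]
    conv_rhs => rw [hspec]
    simp only [conjTranspose_mul, Matrix.mul_assoc]
  rw [partialTrace_mul_diagonal_mul_conjTranspose, Matrix.transpose_eq_zero] at hzero
  simp only [Fin.sum_univ_two, Function.comp_apply] at hLB hone hzero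
  have hd0 := mt hC.eigenvalues_eq_zero_iff.1 hC0
  generalize hC.eigenvalues = d at hd0 hzero
  generalize krausOfCol (V * U) 0 = A at *
  generalize krausOfCol (V * U) 1 = B at *
  have hA : A ≠ 0 := by
    rintro rfl
    have := rank_choi_le_one_of_eq_conj (L := L) (A := B) (by simpa using hLB)
    omega
  have hB : B ≠ 0 := by
    rintro rfl
    have := rank_choi_le_one_of_eq_conj (L := L) (A := A) (by simpa using hLB)
    omega
  have hBA : Bᴴ * B = 1 - Aᴴ * A := eq_sub_of_add_eq' hone
  have hlin : ((d 0 - d 1 : ℝ) : ℂ) • (Aᴴ * A) = ((-d 1 : ℝ) : ℂ) • 1 := by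
    rw [hBA] at hzero
    rw [← sub_eq_zero, ← hzero]
    push_cast
    module
  have hd : d 0 - d 1 ≠ 0 := fun h => hd0 <| by
    rw [h] at hlin
    have h1 : d 1 = 0 := by
      have := congrFun (congrFun hlin 0) 0
      simpa using this.symm
    ext i
    fin_cases i
    · simpa [h1] using h
    · simpa using h1
  have hdC : ((d 0 - d 1 : ℝ) : ℂ) ≠ 0 := by exact_mod_cast hd
  have hAs : Aᴴ * A = ((-d 1 / (d 0 - d 1) : ℝ) : ℂ) • 1 := by
    rw [← inv_smul_smul₀ hdC (Aᴴ * A), hlin, smul_smul]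
    congr 1
    push_cast
    ring
  generalize -d 1 / (d 0 - d 1) = s at hAs
  have hBs : Bᴴ * B = ((1 - s : ℝ) : ℂ) • 1 := by
    rw [hBA, hAs]
    push_cast
    module
  obtain ⟨hs, U₁, hU₁, hAU⟩ := exists_isometry_of_conjTranspose_mul_self_eq_smul hA hAs
  obtain ⟨hs', U₂, hU₂, hBU⟩ := exists_isometry_of_conjTranspose_mul_self_eq_smul hB hBs
  have hmix : ∀ X, L X = (s : ℂ) • (U₁ * X * U₁ᴴ) + ((1 - s : ℝ) : ℂ) • (U₂ * X * U₂ᴴ) :=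
    fun X => by rw [hLB, hAU, hBU]
  refine ⟨s, U₁, U₂, hs, sub_pos.1 hs', hU₁, hU₂, ?_, hmix⟩
  by_contra! hcon
  have := rank_choi_le_one_of_eq_conj (L := L) (A := U₁) fun X => by
    rw [hmix, ← hcon]
    push_cast
    module
  omega

/-- The linear map `X ↦ A * X * Aᴴ`. -/
def conjMap {m n : ℕ} (A : Matrix (Fin n) (Fin m) ℂ) :
    Matrix (Fin m) (Fin m) ℂ →ₗ[ℂ] Matrix (Fin n) (Fin n) ℂ where
  toFun X := A * X * Aᴴ
  map_add' X Y := by rw [Matrix.mul_add, Matrix.add_mul]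
  map_smul' c X := by simp

theorem isChannel_conjMap {m n : ℕ} {A : Matrix (Fin n) (Fin m) ℂ} (hA : Aᴴ * A = 1) :
    IsChannel m n (conjMap A) :=
  ⟨1, fun _ => A, fun X => by simp [conjMap], by simpa using hA⟩

/-- A channel of Choi rank one is conjugation by an isometry. -/
theorem exists_isometry_of_rank_choi_eq_one {m n : ℕ}
    {L : Matrix (Fin m) (Fin m) ℂ →ₗ[ℂ] Matrix (Fin n) (Fin n) ℂ} (hL : IsChannel m n L)
    (hr : (choi m n L).rank = 1) :
    ∃ U : Matrix (Fin n) (Fin m) ℂ, Uᴴ * U = 1 ∧ ∀ X, L X = U * X * Uᴴ := by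
  have hfac := ((isChannel_iff L).1 hL).1.exists_eq_mul_conjTranspose
  rw [hr] at hfac
  obtain ⟨V, -, hV, -⟩ := hfac
  have hone := ((isChannel_iff L).1 hL).2
  rw [hV, partialTrace_mul_conjTranspose_eq_one_iff] at hone
  exact ⟨krausOfCol V 0, by simpa using hone,
    by simpa using (choi_eq_mul_conjTranspose_iff L V).1 hV⟩

theorem IsChannel.rank_choi_ne_zero {m n : ℕ} [NeZero m]
    {L : Matrix (Fin m) (Fin m) ℂ →ₗ[ℂ] Matrix (Fin n) (Fin n) ℂ} (hL : IsChannel m n L) :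
    (choi m n L).rank ≠ 0 := fun h => by
  have hfac := ((isChannel_iff L).1 hL).1.exists_eq_mul_conjTranspose
  rw [h] at hfac
  obtain ⟨V, -, hV, -⟩ := hfac
  have hone := ((isChannel_iff L).1 hL).2
  rw [hV, partialTrace_mul_conjTranspose_eq_one_iff] at hone
  simp at hone

/-- `L ∈ L_{2,2}` is extreme iff either it is a unitary conjugation, or
`rank Z(L) = 2` and `L` is not a proper convex combination of two distinct unitary
conjugations. -/
theorem stmt18 (L : Matrix (Fin 2) (Fin 2) ℂ →ₗ[ℂ] Matrix (Fin 2) (Fin 2) ℂ)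
    (hL : IsChannel 2 2 L) :
    IsExtremeChannel 2 2 L ↔
      ((∃ U : Matrix (Fin 2) (Fin 2) ℂ, Uᴴ * U = 1 ∧ ∀ X, L X = U * X * Uᴴ) ∨
       ((choi 2 2 L).rank = 2 ∧
        ¬ ∃ (t : ℝ) (U₁ U₂ : Matrix (Fin 2) (Fin 2) ℂ),
          0 < t ∧ t < 1 ∧ U₁ᴴ * U₁ = 1 ∧ U₂ᴴ * U₂ = 1 ∧
          (∃ X : Matrix (Fin 2) (Fin 2) ℂ, U₁ * X * U₁ᴴ ≠ U₂ * X * U₂ᴴ) ∧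
          ∀ X, L X = (t : ℂ) • (U₁ * X * U₁ᴴ) + ((1 - t : ℝ) : ℂ) • (U₂ * X * U₂ᴴ))) := by
  constructor
  · intro hext
    have hle := hext.rank_choi_le
    have hne := hL.rank_choi_ne_zero
    obtain hr | hr : (choi 2 2 L).rank = 1 ∨ (choi 2 2 L).rank = 2 := by omega
    · exact Or.inl (exists_isometry_of_rank_choi_eq_one hL hr)
    · refine Or.inr ⟨hr, ?_⟩
      rintro ⟨t, U₁, U₂, ht0, ht1, hU₁, hU₂, ⟨X, hX⟩, hmix⟩
      obtain ⟨h₁, h₂⟩ := hext.2 (conjMap U₁) (conjMap U₂) (isChannel_conjMap hU₁)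
        (isChannel_conjMap hU₂) t ht0 ht1 (LinearMap.ext hmix)
      exact hX (LinearMap.congr_fun (h₁.trans h₂.symm) X)
  · rintro (⟨U, -, hU⟩ | ⟨hr, hmix⟩)
    · exact isExtremeChannel_of_eq_conj hL hU
    · by_contra hext
      exact hmix (exists_unitary_mixture hL hr hext)
end
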